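/- Let k ∈ ℤ≥0 and let M ∈ (0,1) be the unique real number satisfying ∫_0^M t^{k/2}·(1−t)^{m/2−2} dt = ∫_M^1 t^{k/2}·(1−t)^{m/2−2} dt (the median of the Beta(k/2+1, m/2−1) distribution). If N > 4·M^{1/2}/(1−M), then the Poincaré series P_{Γ,χ}f_{k,m} is not identically zero on ℍ. -/

import Mathlib

open Complex MeasureTheory Filter Topology
open scoped Real

set_option autoImplicit false

noncomputable section

/-- `SL₂(ℤ)`. -/
abbrev SL2Z := Matrix.SpecialLinearGroup (Fin 2) ℤ

/-- The upper half-plane, as a subset of `ℂ`. -/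
def UH : Set ℂ := {z : ℂ | 0 < z.im}

/-- The `(i,j)` entry of `γ ∈ SL₂(ℤ)`, as a complex number. -/
def entry (γ : SL2Z) (i j : Fin 2) : ℂ :=
  ((γ : Matrix (Fin 2) (Fin 2) ℤ) i j : ℂ)

/-- The Möbius action of `SL₂(ℤ)` on the upper half-plane (as a map on `ℂ`). -/
def act (γ : SL2Z) (z : ℂ) : ℂ :=
  (entry γ 0 0 * z + entry γ 0 1) / (entry γ 1 0 * z + entry γ 1 1)

/-- The hyperbolic measure `dv(x+iy) = dx·dy/y²` on the upper half-plane. -/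
def hypMeasure : Measure ℂ :=
  ((volume : Measure ℂ).withDensity fun z => ENNReal.ofReal (1 / z.im ^ 2)).restrict UH

/-- A multiplier system on `Γ`: holomorphic square roots `η_γ` of `z ↦ c_γ z + d_γ`
satisfying the cocycle condition. -/
structure IsMultiplierSystem (Γ : Subgroup SL2Z) (η : Γ → ℂ → ℂ) : Prop where
  holo : ∀ γ : Γ, DifferentiableOn ℂ (η γ) UH
  sq : ∀ γ : Γ, ∀ z ∈ UH, η γ z ^ 2 = entry (γ : SL2Z) 1 0 * z + entry (γ : SL2Z) 1 1
  cocycle : ∀ γ₁ γ₂ : Γ, ∀ z ∈ UH,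
    η (γ₁ * γ₂) z = η γ₁ (act (γ₂ : SL2Z) z) * η γ₂ z

/-- `χ` has finite order. -/
def HasFiniteOrderChar (Γ : Subgroup SL2Z) (χ : Γ →* ℂˣ) : Prop :=
  ∃ n : ℕ, 0 < n ∧ ∀ γ : Γ, χ γ ^ n = 1

/-- `f` is a cusp form of weight `m = 5/2 + j` for `(Γ, η, χ)`; here
`η γ z ^ (-(5 + 2j))` is the integer power `η_γ(z)^{-2m}`, and the boundedness of
`‖f‖·(Im z)^{m/2}` on the upper half-plane expresses the vanishing at all cusps. -/
def IsCuspForm (Γ : Subgroup SL2Z) (η : Γ → ℂ → ℂ) (χ : Γ →* ℂˣ) (m : ℝ) (j : ℕ)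
    (f : ℂ → ℂ) : Prop :=
  DifferentiableOn ℂ f UH ∧
  (∀ γ : Γ, ∀ z ∈ UH,
    f (act (γ : SL2Z) z) * η γ z ^ (-(5 + 2 * (j : ℤ))) = (χ γ : ℂ) * f z) ∧
  ∃ C : ℝ, ∀ z ∈ UH, ‖f z‖ * z.im ^ (m / 2) ≤ C

/-- A measurable fundamental domain for the action of `Γ` on the upper half-plane,
with respect to the hyperbolic measure. -/
def IsFundDom (Γ : Subgroup SL2Z) (F : Set ℂ) : Prop :=
  MeasurableSet F ∧ F ⊆ UH ∧
  hypMeasure (UH \ ⋃ γ : Γ, act (γ : SL2Z) '' F) = 0 ∧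
  ∀ γ : Γ, γ ≠ 1 → hypMeasure (F ∩ act (γ : SL2Z) '' F) = 0

/-- `f_{k,m}(z) = (2i)^m (z-i)^k / (z+i)^{m+k}` (principal powers). -/
def fkm (m : ℝ) (k : ℕ) (z : ℂ) : ℂ :=
  (2 * I) ^ (m : ℂ) * (z - I) ^ k / (z + I) ^ ((m : ℂ) + (k : ℂ))

/-- The term indexed by `γ` of the Poincaré series `P_{Γ,χ} f_{k,m}`;
`η γ z ^ (-(5 + 2j))` is the integer power `η_γ(z)^{-2m}` for `m = 5/2 + j`. -/
def PTerm (Γ : Subgroup SL2Z) (η : Γ → ℂ → ℂ) (χ : Γ →* ℂˣ) (m : ℝ) (j : ℕ) (k : ℕ)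
    (γ : Γ) (z : ℂ) : ℂ :=
  (starRingEnd ℂ) (χ γ : ℂ) * fkm m k (act (γ : SL2Z) z) * η γ z ^ (-(5 + 2 * (j : ℤ)))

/-- The Poincaré series `P_{Γ,χ} f_{k,m}`. -/
def PoincareP (Γ : Subgroup SL2Z) (η : Γ → ℂ → ℂ) (χ : Γ →* ℂˣ) (m : ℝ) (j : ℕ) (k : ℕ)
    (z : ℂ) : ℂ :=
  ∑' γ : Γ, PTerm Γ η χ m j k γ z


section Helpers

open UpperHalfPlane
def tt (z : ℍ) : ℝ := ‖((z : ℂ) - Complex.I) / ((z : ℂ) + Complex.I)‖ ^ 2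

lemma crit {G α : Type*} [Group G] [Countable G] [MulAction G α] [MeasurableSpace α]
    (μ : Measure α) [MeasurableConstSMul G α] [SMulInvariantMeasure G α μ]
    (H : α → ENNReal) (hH : Measurable H) (C : Set α) (hC : MeasurableSet C)
    (hd : ∀ γ : G, γ ≠ 1 → ∀ z ∈ C, γ • z ∉ C)
    (hlt : ∫⁻ z in Cᶜ, H z ∂μ < ∫⁻ z in C, H z ∂μ) :
    ∃ z, ∑' γ : {γ : G // γ ≠ 1}, H (γ.1 • z) < H z := by
  by_contra! hcon
  refine absurd hlt (not_lt.mpr ?_)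
  calc ∫⁻ z in C, H z ∂μ ≤ ∫⁻ z in C, ∑' γ : {γ : G // γ ≠ 1}, H (γ.1 • z) ∂μ :=
        lintegral_mono hcon
    _ = ∑' γ : {γ : G // γ ≠ 1}, ∫⁻ z in C, H (γ.1 • z) ∂μ := by
        refine lintegral_tsum fun γ => ?_
        exact (hH.comp (measurable_const_smul γ.1)).aemeasurable
    _ = ∑' γ : {γ : G // γ ≠ 1}, ∫⁻ z in (fun x => (γ.1)⁻¹ • x) ⁻¹' C, H z ∂μ := by
        congr 1; ext γ
        have h := (measurePreserving_smul γ.1 μ).setLIntegral_comp_preimage_emb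
          (measurableEmbedding_const_smul γ.1) H ((fun x => (γ.1)⁻¹ • x) ⁻¹' C)
        rw [← h]
        congr 2
        ext x; simp
    _ = ∫⁻ z in ⋃ γ : {γ : G // γ ≠ 1}, (fun x => (γ.1)⁻¹ • x) ⁻¹' C, H z ∂μ := by
        rw [lintegral_iUnion]
        · exact fun γ => measurable_const_smul _ hC
        · intro γ δ hne
          rw [Function.onFun, Set.disjoint_left]
          intro x hx hy
          refine hd ((δ.1)⁻¹ * γ.1) ?_ _ hx ?_
          · intro h
            apply hne
            ext
            exact (inv_mul_eq_one.mp h).symm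
          · simpa [smul_smul] using hy
    _ ≤ ∫⁻ z in Cᶜ, H z ∂μ := by
        apply lintegral_mono_set
        refine Set.iUnion_subset fun γ x hx hxC => ?_
        exact hd (γ.1)⁻¹ (by simpa using γ.2) x hxC hx

lemma radial_disc (g : ℝ → ENNReal) (hg : Measurable g) :
    ∫⁻ w in Metric.ball (0:ℂ) 1, g (‖w‖ ^ 2) =
      ENNReal.ofReal π * ∫⁻ t in Set.Ioo (0:ℝ) 1, g t := by
  rw [← lintegral_indicator Metric.isOpen_ball.measurableSet,
    ← Complex.lintegral_comp_polarCoord_symm]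
  have e1 : ∀ p ∈ polarCoord.target, ENNReal.ofReal p.1 •
      (Metric.ball (0:ℂ) 1).indicator (fun w => g (‖w‖ ^ 2)) (Complex.polarCoord.symm p)
      = (Set.Ioo (0:ℝ) 1).indicator (fun r => ENNReal.ofReal r * g (r ^ 2)) p.1 := by
    intro p hp
    simp only [polarCoord_target, Set.mem_prod, Set.mem_Ioi] at hp
    have : ‖Complex.polarCoord.symm p‖ = p.1 := by
      rw [Complex.norm_polarCoord_symm, abs_of_pos hp.1]
    simp [Set.indicator, abs_of_pos hp.1, hp.1]
  rw [setLIntegral_congr_fun polarCoord.open_target.measurableSet e1]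
  have hm : Measurable ((Set.Ioo (0:ℝ) 1).indicator (fun r => ENNReal.ofReal r * g (r ^ 2))) := by
    apply Measurable.indicator _ measurableSet_Ioo
    fun_prop
  rw [polarCoord_target, Measure.volume_eq_prod, ← Measure.prod_restrict,
    lintegral_prod _ (by fun_prop)]
  simp only [lintegral_const, Measure.restrict_apply MeasurableSet.univ, Set.univ_inter,
    Real.volume_Ioo]
  rw [lintegral_mul_const _ hm, lintegral_indicator measurableSet_Ioo,
    Measure.restrict_restrict measurableSet_Ioo]
  have e2 : Set.Ioo (0:ℝ) 1 ∩ Set.Ioi 0 = Set.Ioo 0 1 := by ext; simp; tauto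
  rw [e2]
  have e3 : (fun r : ℝ => r ^ 2) '' Set.Ioo 0 1 = Set.Ioo 0 1 := by
    ext y
    constructor
    · rintro ⟨x, ⟨h0, h1⟩, rfl⟩
      exact ⟨by positivity, by simp only; nlinarith⟩
    · rintro ⟨h0, h1⟩
      refine ⟨√y, ⟨Real.sqrt_pos.mpr h0, ?_⟩, Real.sq_sqrt h0.le⟩
      rw [Real.sqrt_lt' one_pos]; simpa using h1
  have h := lintegral_image_eq_lintegral_abs_deriv_mul (s := Set.Ioo (0:ℝ) 1)
    (f := fun r => r ^ 2) (f' := fun r => 2 * r) measurableSet_Ioo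
    (fun x _ => by simpa using (hasDerivAt_pow 2 x).hasDerivWithinAt)
    (fun x hx y hy h => by
      simp only at h
      exact (pow_left_inj₀ hx.1.le hy.1.le two_ne_zero).mp h) g
  rw [e3] at h
  rw [h]
  have e4 : ∀ r ∈ Set.Ioo (0:ℝ) 1, ENNReal.ofReal |2 * r| * g (r ^ 2) =
     2 * (ENNReal.ofReal r * g (r ^ 2)) := by
    intro r hr
    rw [abs_of_pos (by linarith [hr.1]), ENNReal.ofReal_mul (by norm_num)]
    simp [mul_assoc]
  rw [setLIntegral_congr_fun measurableSet_Ioo e4, lintegral_const_mul _ (by fun_prop)]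
  rw [show π - -π = π * 2 by ring, ENNReal.ofReal_mul Real.pi_pos.le]
  simp only [ENNReal.ofReal_ofNat]
  ring

lemma tt_lt_one (z : ℍ) : tt z < 1 ∧ 0 ≤ tt z ∧ 1 - tt z = 4 * z.im / ‖(z:ℂ) + Complex.I‖ ^ 2 := by
  have hz := z.im_pos
  have h1 : ‖(z:ℂ) + Complex.I‖ ^ 2 = z.re ^ 2 + (z.im + 1) ^ 2 := by
    rw [← Complex.normSq_eq_norm_sq, Complex.normSq_apply]; simp; ring
  have h2 : ‖(z:ℂ) - Complex.I‖ ^ 2 = z.re ^ 2 + (z.im - 1) ^ 2 := by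
    rw [← Complex.normSq_eq_norm_sq, Complex.normSq_apply]; simp; ring
  have hp : 0 < z.re ^ 2 + (z.im + 1) ^ 2 := by positivity
  have h3 : 1 - tt z = 4 * z.im / ‖(z:ℂ) + Complex.I‖ ^ 2 := by
    rw [tt, norm_div, div_pow, h1, h2]
    field_simp
    ring
  refine ⟨?_, ?_, h3⟩
  · have : 0 < 4 * z.im / ‖(z:ℂ) + Complex.I‖ ^ 2 := by rw [h1]; positivity
    linarith
  · unfold tt; positivity

lemma measurable_tt : Measurable tt := by
  unfold tt
  fun_prop

/-- inverse Cayley transform -/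
def cay (w : ℂ) : ℂ := Complex.I * (1 + w) / (1 - w)

lemma cay_im (w : ℂ) (hw : w ≠ 1) : (cay w).im = (1 - ‖w‖ ^ 2) / ‖1 - w‖ ^ 2 := by
  have : ‖1 - w‖ ^ 2 ≠ 0 := by
    have : 1 - w ≠ 0 := sub_ne_zero.mpr hw.symm
    positivity
  rw [← Complex.normSq_eq_norm_sq, Complex.normSq_apply] at *
  rw [← Complex.normSq_eq_norm_sq, Complex.normSq_apply] at *
  unfold cay
  rw [Complex.div_im, Complex.normSq_apply]
  simp only [Complex.sub_re, Complex.sub_im, Complex.one_re, Complex.one_im] at *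
  simp
  field_simp
  ring

lemma cay_inv (w : ℂ) (hw : w ≠ 1) : (cay w - Complex.I) / (cay w + Complex.I) = w := by
  have : 1 - w ≠ 0 := sub_ne_zero.mpr hw.symm
  have e1 : cay w - Complex.I = 2 * Complex.I * w / (1 - w) := by
    unfold cay; field_simp; ring
  have e2 : cay w + Complex.I = 2 * Complex.I / (1 - w) := by
    unfold cay; field_simp; ring
  rw [e1, e2]; field_simp

lemma cay_image : cay '' Metric.ball 0 1 = Set.range UpperHalfPlane.coe := by
  ext z
  constructor
  · rintro ⟨w, hw, rfl⟩
    rw [mem_ball_zero_iff] at hw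
    have hw1 : w ≠ 1 := by rintro rfl; simp at hw
    have : 1 - w ≠ 0 := sub_ne_zero.mpr hw1.symm
    refine ⟨⟨cay w, ?_⟩, rfl⟩
    rw [cay_im w hw1]
    have : 0 < 1 - ‖w‖ ^ 2 := by nlinarith [norm_nonneg w]
    positivity
  · rintro ⟨z, rfl⟩
    have h := tt_lt_one z
    have hz : (z:ℂ) + Complex.I ≠ 0 := by
      intro h
      have := congrArg Complex.im h
      have := z.im_pos
      simp at *
      linarith
    refine ⟨((z:ℂ) - Complex.I) / (z + Complex.I), ?_, ?_⟩
    · rw [mem_ball_zero_iff]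
      have := h.1
      unfold tt at this
      exact (sq_lt_one_iff₀ (norm_nonneg _)).mp this
    · unfold cay
      have e1 : 1 - ((z:ℂ) - Complex.I) / (z + Complex.I) = 2 * Complex.I / (z + Complex.I) := by
        field_simp; ring
      have e2 : 1 + ((z:ℂ) - Complex.I) / (z + Complex.I) = 2 * z / (z + Complex.I) := by
        field_simp; ring
      rw [e1, e2]
      field_simp

lemma cay_deriv (w : ℂ) (hw : w ≠ 1) : HasDerivAt cay (2 * Complex.I / (1 - w) ^ 2) w := by
  have h1 : 1 - w ≠ 0 := sub_ne_zero.mpr hw.symm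
  have := (((hasDerivAt_id w).const_add 1).const_mul Complex.I).div
    ((hasDerivAt_id w).const_sub 1) h1
  convert! this using 1
  simp
  field_simp
  ring

lemma radial (g : ℝ → ENNReal) (hg : Measurable g) :
    ∫⁻ z : ℍ, g (tt z) =
      ENNReal.ofReal π * ∫⁻ t in Set.Ioo (0:ℝ) 1, ENNReal.ofReal (4 / (1 - t) ^ 2) * g t := by
  rw [← radial_disc _ (by fun_prop)]
  have hball : ∀ w ∈ Metric.ball (0:ℂ) 1, w ≠ 1 := by
    rintro w hw rfl; simp at hw
  have h := MeasureTheory.lintegral_image_eq_lintegral_abs_det_fderiv_mul (E := ℂ)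
      volume (s := Metric.ball 0 1) (f := cay) Metric.isOpen_ball.measurableSet
      (fun w hw => ((cay_deriv w (hball w hw)).hasFDerivAt.restrictScalars ℝ).hasFDerivWithinAt)
      (fun x hx y hy h => by
        rw [← cay_inv x (hball x hx), ← cay_inv y (hball y hy), h])
      (fun z => ENNReal.ofReal (1 / z.im ^ 2) *
        g (‖(z - Complex.I) / (z + Complex.I)‖ ^ 2))
  rw [cay_image] at h
  have mp : MeasurePreserving UpperHalfPlane.coe (volume.comap UpperHalfPlane.coe)
      (volume.restrict (.range UpperHalfPlane.coe)) :=
    ⟨measurable_coe, by rw [measurableEmbedding_coe.map_comap]⟩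
  rw [← mp.lintegral_comp_emb measurableEmbedding_coe] at h
  have him : Measurable (fun z : ℍ => z.im) := UpperHalfPlane.continuous_im.measurable
  have e : (fun z : ℍ => (((1 / NNReal.mk z.im z.im_pos.le : NNReal) ^ 2 : NNReal) : ENNReal)) =
      fun z : ℍ => ENNReal.ofReal (1 / z.im ^ 2) := by
    ext z
    rw [ENNReal.ofReal, ENNReal.coe_inj]
    ext
    rw [Real.coe_toNNReal _ (by positivity)]
    simp
  rw [volume_def, e, lintegral_withDensity_eq_lintegral_mul₀ (by fun_prop)
    (show AEMeasurable (fun z => g (tt z)) _ from (hg.comp measurable_tt).aemeasurable)]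
  refine Eq.trans ?_ (h.trans ?_)
  · rfl
  · refine setLIntegral_congr_fun Metric.isOpen_ball.measurableSet fun w hw => ?_
    have hw1 := hball w hw
    have hd : ((ContinuousLinearMap.toSpanSingleton ℂ
        (2 * Complex.I / (1 - w) ^ 2)).restrictScalars ℝ).det = 4 / ‖1 - w‖ ^ 4 := by
      simp [ContinuousLinearMap.det, LinearMap.det_restrictScalars,
        Algebra.norm_complex_eq, Complex.normSq_eq_norm_sq]
      ring
    have h1 : 1 - w ≠ 0 := sub_ne_zero.mpr hw1.symm
    simp only [cay_inv w hw1, cay_im w hw1]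
    rw [hd, ← mul_assoc, ← ENNReal.ofReal_mul (by positivity), abs_of_nonneg (by positivity)]
    congr 2
    rw [mem_ball_zero_iff] at hw
    have : 1 - ‖w‖ ^ 2 ≠ 0 := by nlinarith [norm_nonneg w]
    field_simp

lemma beta_integrable (k : ℕ) (m : ℝ) (hm : 5 / 2 ≤ m) :
    IntervalIntegrable (fun t : ℝ => t ^ ((k : ℝ) / 2) * (1 - t) ^ (m / 2 - 2)) volume 0 1 := by
  apply IntervalIntegrable.continuousOn_mul
  · have h := intervalIntegral.intervalIntegrable_rpow' (a := 0) (b := 1) (r := m / 2 - 2)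
      (by linarith)
    have := (h.comp_sub_left 1).symm
    simpa using this
  · apply Continuous.continuousOn
    exact Real.continuous_rpow_const (by positivity)

/-- The half-mass inequality slightly beyond the median. -/
lemma beta_lt (k : ℕ) (m : ℝ) (hm : 5 / 2 ≤ m) (M R : ℝ) (hM : M ∈ Set.Ioo (0 : ℝ) 1)
    (hR : R ∈ Set.Ioo M 1)
    (hmed : ∫ t in (0 : ℝ)..M, t ^ ((k : ℝ) / 2) * (1 - t) ^ (m / 2 - 2) =
      ∫ t in M..(1 : ℝ), t ^ ((k : ℝ) / 2) * (1 - t) ^ (m / 2 - 2)) :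
    ∫⁻ t in Set.Ioo R 1, ENNReal.ofReal (t ^ ((k : ℝ) / 2) * (1 - t) ^ (m / 2 - 2)) <
    ∫⁻ t in Set.Ioo 0 R, ENNReal.ofReal (t ^ ((k : ℝ) / 2) * (1 - t) ^ (m / 2 - 2)) := by
  set h : ℝ → ℝ := fun t => t ^ ((k : ℝ) / 2) * (1 - t) ^ (m / 2 - 2) with hh
  have hi : IntervalIntegrable h volume 0 1 := beta_integrable k m hm
  obtain ⟨hM0, hM1⟩ := hM
  obtain ⟨hMR, hR1⟩ := hR
  have hsub : ∀ a b : ℝ, 0 ≤ a → a ≤ b → b ≤ 1 → IntervalIntegrable h volume a b := by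
    intro a b ha hab hb
    apply hi.mono_set
    rw [Set.uIcc_of_le hab, Set.uIcc_of_le zero_le_one]
    exact Set.Icc_subset_Icc ha hb
  have hpos : ∀ t ∈ Set.Ioo (0:ℝ) 1, 0 < h t := by
    intro t ht
    have : 0 < 1 - t := by linarith [ht.2]
    have := ht.1
    simp only [hh]
    positivity
  have hconv : ∀ a b : ℝ, 0 ≤ a → a ≤ b → b ≤ 1 →
      ∫⁻ t in Set.Ioo a b, ENNReal.ofReal (h t) = ENNReal.ofReal (∫ t in a..b, h t) := by
    intro a b ha hab hb
    rw [intervalIntegral.integral_of_le hab, integral_Ioc_eq_integral_Ioo,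
      ofReal_integral_eq_lintegral_ofReal]
    · exact ((intervalIntegrable_iff_integrableOn_Ioo_of_le hab).mp (hsub a b ha hab hb))
    · filter_upwards [ae_restrict_mem measurableSet_Ioo] with t ht
      exact (hpos t ⟨ha.trans_lt ht.1, ht.2.trans_le hb⟩).le
  have p1 : 0 < ∫ t in M..R, h t := by
    apply intervalIntegral.intervalIntegral_pos_of_pos_on (hsub M R hM0.le hMR.le hR1.le) _ hMR
    exact fun t ht => hpos t ⟨hM0.trans ht.1, ht.2.trans hR1⟩
  have p2 : 0 < ∫ t in (0:ℝ)..M, h t := by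
    apply intervalIntegral.intervalIntegral_pos_of_pos_on (hsub 0 M le_rfl hM0.le hM1.le) _ hM0
    exact fun t ht => hpos t ⟨ht.1, ht.2.trans hM1⟩
  have q1 := intervalIntegral.integral_add_adjacent_intervals
    (hsub 0 M le_rfl hM0.le hM1.le) (hsub M R hM0.le hMR.le hR1.le)
  have q2 := intervalIntegral.integral_add_adjacent_intervals
    (hsub M R hM0.le hMR.le hR1.le) (hsub R 1 (hM0.trans hMR).le hR1.le le_rfl)
  rw [hconv R 1 (hM0.trans hMR).le hR1.le le_rfl, hconv 0 R le_rfl (hM0.trans hMR).le hR1.le]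
  apply ENNReal.ofReal_lt_ofReal_iff (by linarith) |>.mpr
  linarith

lemma exists_R (N : ℕ) (M : ℝ) (hM : M ∈ Set.Ioo (0 : ℝ) 1)
    (hNM : (N : ℝ) > 4 * M ^ ((1 : ℝ) / 2) / (1 - M)) :
    ∃ R ∈ Set.Ioo M 1, 4 * √R / (1 - R) < N := by
  have hc : ContinuousAt (fun R : ℝ => 4 * √R / (1 - R)) M := by
    apply ContinuousAt.div (by fun_prop) (by fun_prop)
    linarith [hM.2]
  rw [← Real.sqrt_eq_rpow] at hNM
  have h1 : ∀ᶠ R in 𝓝[>] M, 4 * √R / (1 - R) < N :=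
    (hc.eventually_lt_const hNM).filter_mono nhdsWithin_le_nhds
  have h2 : ∀ᶠ R in 𝓝[>] M, R ∈ Set.Ioo M 1 := Ioo_mem_nhdsGT hM.2
  obtain ⟨R, hR1, hR2⟩ := (h1.and h2).exists
  exact ⟨R, hR2, hR1⟩

lemma tt_eq (z : ℍ) : tt z = Real.tanh (dist z UpperHalfPlane.I / 2) ^ 2 := by
  rw [UpperHalfPlane.tanh_half_dist, tt, norm_div]
  simp [Complex.dist_eq]

lemma sinh_dist_lt (N : ℕ) (R : ℝ) (hR : R < 1) (hN : 4 * √R / (1 - R) < N) (z : ℍ)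
    (hz : tt z < R) : Real.sinh (dist z UpperHalfPlane.I) < N / 2 := by
  set D := dist z UpperHalfPlane.I
  have hD : 0 ≤ D := dist_nonneg
  have ht := tt_eq z
  set T := Real.tanh (D / 2) with hT
  have hT0 : 0 ≤ T := by
    rw [hT, Real.tanh_eq_sinh_div_cosh]
    exact div_nonneg (Real.sinh_nonneg_iff.mpr (by positivity)) (Real.cosh_pos _).le
  have hc := Real.cosh_pos (D / 2)
  have hcs := Real.cosh_sq (D / 2)
  have e : Real.sinh D = 2 * T / (1 - T ^ 2) := by
    have h1 : Real.sinh (D / 2) = T * Real.cosh (D / 2) := by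
      rw [hT, Real.tanh_eq_sinh_div_cosh]; field_simp
    rw [show D = 2 * (D / 2) by ring, Real.sinh_two_mul, h1]
    rw [h1] at hcs
    have h3 : Real.cosh (D / 2) ^ 2 * (1 - T ^ 2) = 1 := by linarith
    have h4 : 1 - T ^ 2 ≠ 0 := by intro h; rw [h] at h3; simp at h3
    rw [eq_div_iff h4]
    linear_combination (2 * T) * h3
  have hTR : T ^ 2 < R := ht ▸ hz
  have hTR' : T ≤ √R := Real.le_sqrt_of_sq_le hTR.le
  have h5 : 2 * T / (1 - T ^ 2) ≤ 2 * √R / (1 - R) := by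
    apply div_le_div₀ (by positivity) (by linarith) (by linarith) (by linarith)
  rw [e]
  have : 4 * √R / (1 - R) = 2 * (2 * √R / (1 - R)) := by ring
  linarith

lemma cosh_dist_I (γ : SL2Z) : Real.cosh (dist (γ • UpperHalfPlane.I) UpperHalfPlane.I) =
    1 + ((γ 0 0 - γ 1 1) ^ 2 + (γ 0 1 + γ 1 0) ^ 2 : ℤ) / 2 := by
  have hdet : (γ 0 0 : ℝ) * γ 1 1 - γ 0 1 * γ 1 0 = 1 := by
    have := γ.det_coe
    rw [Matrix.det_fin_two] at this
    exact_mod_cast this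
  have hp : 0 < (γ 1 0 : ℝ) ^ 2 + (γ 1 1 : ℝ) ^ 2 := by
    by_contra hcon
    have h0 : (γ 1 0 : ℝ) = 0 := by nlinarith [sq_nonneg (γ 1 0 : ℝ), sq_nonneg (γ 1 1 : ℝ)]
    have h1 : (γ 1 1 : ℝ) = 0 := by nlinarith [sq_nonneg (γ 1 0 : ℝ), sq_nonneg (γ 1 1 : ℝ)]
    rw [h0, h1] at hdet
    simp at hdet
  have hp' : (γ 1 0 : ℝ) * γ 1 0 + (γ 1 1 : ℝ) * γ 1 1 ≠ 0 := by nlinarith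
  have hq : (γ 1 1 : ℝ) ^ 2 + (γ 1 0 : ℝ) ^ 2 ≠ 0 := by linarith
  have hz : ((γ • UpperHalfPlane.I : ℍ) : ℂ) =
      ((γ 0 0 : ℂ) * Complex.I + γ 0 1) / ((γ 1 0 : ℂ) * Complex.I + γ 1 1) := by
    rw [UpperHalfPlane.coe_specialLinearGroup_apply]; simp
  rw [UpperHalfPlane.cosh_dist']
  have hre : (γ • UpperHalfPlane.I : ℍ).re = ((γ 0 0 : ℝ) * γ 1 0 + γ 0 1 * γ 1 1) /
      ((γ 1 0 : ℝ) ^ 2 + (γ 1 1 : ℝ) ^ 2) := by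
    rw [← UpperHalfPlane.coe_re, hz, Complex.div_re, Complex.normSq_apply]
    simp
    rw [← sq, ← sq]
    field_simp
    try ring
  have him : (γ • UpperHalfPlane.I : ℍ).im = 1 /
      ((γ 1 0 : ℝ) ^ 2 + (γ 1 1 : ℝ) ^ 2) := by
    rw [← UpperHalfPlane.coe_im, hz, Complex.div_im, Complex.normSq_apply]
    simp
    rw [← sq, ← sq]
    field_simp
    linear_combination hdet * ((γ 1 0 : ℝ) ^ 2 + (γ 1 1 : ℝ) ^ 2)
  rw [hre, him]
  simp
  field_simp
  generalize (γ 0 0 : ℝ) = a at *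
  generalize (γ 0 1 : ℝ) = b at *
  generalize (γ 1 0 : ℝ) = c at *
  generalize (γ 1 1 : ℝ) = d at *
  linear_combination (2 * (c ^ 2 + d ^ 2) - (a * d - b * c) - 1) * hdet

lemma tsum_ne_zero_of {ι : Type*} (T : ι → ℂ) (i₀ : ι)
    (h : ∑' i : {i : ι // i ≠ i₀}, ‖T i‖ₑ < ‖T i₀‖ₑ) : ∑' i, T i ≠ 0 := by
  classical
  have hs' : Summable (fun i : {i : ι // i ≠ i₀} => T i) := by
    apply Summable.of_nnnorm
    rw [← ENNReal.tsum_coe_ne_top_iff_summable]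
    exact (h.trans_le le_top).ne
  have hs : Summable T := by
    have := (Set.finite_singleton i₀).summable_compl_iff (f := T)
    exact this.mp hs'
  have e := hs.sum_add_tsum_compl (s := {i₀})
  rw [Finset.sum_singleton] at e
  have e2 : ∑' x : ↑((({i₀} : Finset ι) : Set ι)ᶜ), T x = ∑' i : {i : ι // i ≠ i₀}, T i := by
    rw [Finset.coe_singleton]
    rfl
  rw [e2] at e
  intro h0
  rw [h0] at e
  have h1 : T i₀ = -∑' i : {i : ι // i ≠ i₀}, T i := eq_neg_of_add_eq_zero_left e
  rw [h1, enorm_neg] at h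
  exact absurd h (not_lt.mpr enorm_tsum_le_tsum_enorm)

lemma act_eq (γ : SL2Z) (z : ℍ) : act γ z = ((γ • z : ℍ) : ℂ) := by
  rw [UpperHalfPlane.coe_specialLinearGroup_apply]; simp [act, entry]

lemma eta_one (Γ : Subgroup SL2Z) (η : Γ → ℂ → ℂ) (hη : IsMultiplierSystem Γ η) (z : ℍ) :
    η 1 z = 1 := by
  have h1 := hη.cocycle 1 1 z z.im_pos
  have h2 := hη.sq 1 z z.im_pos
  rw [act_eq] at h1
  simp only [OneMemClass.coe_one, one_smul, mul_one] at h1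
  have h3 : η 1 z ≠ 0 := by
    intro h0
    rw [h0] at h2
    simp [entry] at h2
  exact mul_right_cancel₀ h3 (by rw [one_mul]; exact h1.symm)

lemma no_neg_one (Γ : Subgroup SL2Z) (η : Γ → ℂ → ℂ) (hη : IsMultiplierSystem Γ η) (γ : Γ)
    (h : (γ : SL2Z) = -1) : False := by
  have h1 := hη.cocycle γ γ UpperHalfPlane.I UpperHalfPlane.I.im_pos
  have h2 := hη.sq γ UpperHalfPlane.I UpperHalfPlane.I.im_pos
  have h3 : γ * γ = 1 := by ext1; simp [h]
  have h4 : (γ : SL2Z) • UpperHalfPlane.I = UpperHalfPlane.I := by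
    rw [h, ModularGroup.SL_neg_smul, one_smul]
  rw [h3, eta_one Γ η hη, act_eq, h4, ← sq, h2, h] at h1
  simp [entry] at h1
  norm_num at h1

lemma sq_ge_of_dvd (N : ℕ) (x : ℤ) (h : (N : ℤ) ∣ x) (hx : x ≠ 0) : (N : ℤ) ^ 2 ≤ x ^ 2 := by
  have := Int.le_of_dvd (abs_pos.mpr hx) ((dvd_abs _ _).mpr h)
  rw [← sq_abs x]
  gcongr

lemma large (N : ℕ) (Γ : Subgroup SL2Z)
    (hcong : ∀ γ : Γ,
      (N : ℤ) ∣ (((γ : SL2Z) : Matrix (Fin 2) (Fin 2) ℤ) 0 0 - 1) ∧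
      (N : ℤ) ∣ (((γ : SL2Z) : Matrix (Fin 2) (Fin 2) ℤ) 0 1) ∧
      (N : ℤ) ∣ (((γ : SL2Z) : Matrix (Fin 2) (Fin 2) ℤ) 1 0) ∧
      (N : ℤ) ∣ (((γ : SL2Z) : Matrix (Fin 2) (Fin 2) ℤ) 1 1 - 1))
    (η : Γ → ℂ → ℂ) (hη : IsMultiplierSystem Γ η) (γ : Γ) (hγ : γ ≠ 1) :
    (N : ℤ) ^ 2 ≤ (((γ : SL2Z) 0 0 - (γ : SL2Z) 1 1) ^ 2 +
      ((γ : SL2Z) 0 1 + (γ : SL2Z) 1 0) ^ 2) := by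
  obtain ⟨ha, hb, hc, hd⟩ := hcong γ
  by_cases h1 : (γ : SL2Z) 0 0 - (γ : SL2Z) 1 1 = 0
  swap
  · have := sq_ge_of_dvd N _ (by simpa using dvd_sub ha hd) h1
    nlinarith [sq_nonneg ((γ : SL2Z) 0 1 + (γ : SL2Z) 1 0)]
  by_cases h2 : (γ : SL2Z) 0 1 + (γ : SL2Z) 1 0 = 0
  swap
  · have := sq_ge_of_dvd N _ (dvd_add hb hc) h2
    nlinarith [sq_nonneg ((γ : SL2Z) 0 0 - (γ : SL2Z) 1 1)]
  exfalso
  have hdet := (γ : SL2Z).det_coe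
  rw [Matrix.det_fin_two] at hdet
  have h3 : (γ : SL2Z) 1 1 = (γ : SL2Z) 0 0 := by linarith
  have h4 : (γ : SL2Z) 1 0 = -(γ : SL2Z) 0 1 := by linarith
  rw [h3, h4] at hdet
  obtain ⟨a, ha'⟩ : ∃ a, (γ : SL2Z) 0 0 = a := ⟨_, rfl⟩
  obtain ⟨b, hb'⟩ : ∃ b, (γ : SL2Z) 0 1 = b := ⟨_, rfl⟩
  rw [ha', hb'] at hdet
  rw [ha'] at h3
  rw [hb'] at h4
  have a1 : a ≤ 1 := by nlinarith [mul_self_nonneg b]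
  have a2 : -1 ≤ a := by nlinarith [mul_self_nonneg b]
  have hcase : a = -1 ∨ a = 0 ∨ a = 1 := by omega
  rcases hcase with rfl | rfl | rfl
  · have hb0 : b = 0 := by nlinarith
    subst hb0
    apply no_neg_one Γ η hη γ
    ext i j
    fin_cases i <;> fin_cases j <;> simp [*]
  · apply no_neg_one Γ η hη (γ * γ)
    have hbb : b * b = 1 := by linarith
    ext i j
    fin_cases i <;> fin_cases j <;> simp [Matrix.mul_apply, *]
  · have hb0 : b = 0 := by nlinarith
    subst hb0
    apply hγ
    ext i j
    fin_cases i <;> fin_cases j <;> simp [*]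

def KK (m : ℝ) (k : ℕ) (t : ℝ) : ℝ := t ^ ((k : ℝ) / 2) * (1 - t) ^ (m / 2)

lemma fkm_norm (m : ℝ) (k : ℕ) (z : ℍ) :
    ‖fkm m k z‖ * z.im ^ (m / 2) = KK m k (tt z) := by
  obtain ⟨h1, h2, h3⟩ := tt_lt_one z
  have hz := z.im_pos
  have hne : (z:ℂ) + Complex.I ≠ 0 := by
    intro h
    have := congrArg Complex.im h
    simp at this
    linarith
  have hp : 0 < ‖(z:ℂ) + Complex.I‖ := norm_pos_iff.mpr hne
  unfold KK fkm
  rw [h3, tt, norm_div, norm_div, norm_mul, norm_pow]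
  have c1 : (m:ℂ) + (k:ℂ) = ((m + k : ℝ) : ℂ) := by push_cast; rfl
  rw [c1, Complex.norm_cpow_real, Complex.norm_cpow_real]
  set p := ‖(z:ℂ) + Complex.I‖
  set q := ‖(z:ℂ) - Complex.I‖
  have e1 : ((q / p) ^ 2) ^ ((k:ℝ) / 2) = q ^ k / p ^ k := by
    rw [← Real.rpow_natCast _ 2, ← Real.rpow_mul (by positivity), ← div_pow,
      ← Real.rpow_natCast _ k]
    congr 1
    push_cast; ring
  have e2 : (4 * z.im / p ^ 2) ^ (m / 2) = 2 ^ m * z.im ^ (m / 2) / p ^ m := by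
    rw [Real.div_rpow (by positivity) (by positivity), Real.mul_rpow (by norm_num) hz.le,
      show (4:ℝ) = 2 ^ 2 by norm_num,
      ← Real.rpow_natCast _ 2, ← Real.rpow_natCast _ 2, ← Real.rpow_mul (by positivity),
      ← Real.rpow_mul (by positivity)]
    congr 3 <;> · push_cast; ring
  rw [e1, e2, Real.rpow_add hp, Real.rpow_natCast]
  simp
  field_simp

lemma chi_norm (Γ : Subgroup SL2Z) (χ : Γ →* ℂˣ) (hχ : HasFiniteOrderChar Γ χ) (γ : Γ) :
    ‖(χ γ : ℂ)‖ = 1 := by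
  obtain ⟨n, hn, h⟩ := hχ
  apply norm_eq_one_of_pow_eq_one (n := n) _ hn.ne'
  have := h γ
  have h2 := congrArg Units.val this
  rwa [Units.val_pow_eq_pow_val, Units.val_one] at h2

lemma pterm_norm (Γ : Subgroup SL2Z) (η : Γ → ℂ → ℂ) (hη : IsMultiplierSystem Γ η)
    (χ : Γ →* ℂˣ) (hχ : HasFiniteOrderChar Γ χ)
    (m : ℝ) (j : ℕ) (hm : m = 5 / 2 + j) (k : ℕ) (γ : Γ) (z : ℍ) :
    ‖PTerm Γ η χ m j k γ z‖ * z.im ^ (m / 2) = KK m k (tt (γ • z)) := by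
  have hz := z.im_pos
  rw [← fkm_norm, PTerm, norm_mul, norm_mul, RCLike.norm_conj, chi_norm Γ χ hχ, one_mul, act_eq]
  have hsq := hη.sq γ z z.im_pos
  have him : (γ • z).im = z.im / (‖η γ z‖ ^ 2) ^ 2 := by
    have := ModularGroup.im_smul_eq_div_normSq (γ : SL2Z) z
    rw [← norm_pow, hsq, ← Complex.normSq_eq_norm_sq]
    exact this
  have hpos := (γ • z).im_pos
  have he : 0 < ‖η γ z‖ := by
    rcases (norm_nonneg (η γ z)).eq_or_lt with h | h
    · rw [him, ← h] at hpos; simp at hpos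
    · exact h
  set e := ‖η γ z‖ with hedef
  have e1 : ‖η γ z ^ (-(5 + 2 * (j : ℤ)))‖ * z.im ^ (m / 2) = (γ • z).im ^ (m / 2) := by
    rw [him, norm_zpow, ← hedef, Real.div_rpow hz.le (by positivity), ← pow_mul,
      ← Real.rpow_natCast, ← Real.rpow_mul he.le, ← Real.rpow_intCast, hm]
    rw [div_eq_mul_inv (_ ^ _) (_ ^ _), ← Real.rpow_neg he.le, mul_comm]
    congr 2
    push_cast; ring
  rw [mul_assoc, e1]
  rfl

lemma dist_SL2Z (γ : SL2Z) (z w : ℍ) : dist (γ • z) (γ • w) = dist z w := by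
  have h : ∀ x : ℍ, γ • x = (Matrix.SpecialLinearGroup.map (Int.castRingHom ℝ) γ) • x := by
    intro x
    apply UpperHalfPlane.ext
    rw [UpperHalfPlane.coe_specialLinearGroup_apply, UpperHalfPlane.coe_specialLinearGroup_apply]
    simp
  rw [h, h, dist_smul]

lemma main_crit (N : ℕ) (Γ : Subgroup SL2Z)
    (hcong : ∀ γ : Γ,
      (N : ℤ) ∣ (((γ : SL2Z) : Matrix (Fin 2) (Fin 2) ℤ) 0 0 - 1) ∧
      (N : ℤ) ∣ (((γ : SL2Z) : Matrix (Fin 2) (Fin 2) ℤ) 0 1) ∧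
      (N : ℤ) ∣ (((γ : SL2Z) : Matrix (Fin 2) (Fin 2) ℤ) 1 0) ∧
      (N : ℤ) ∣ (((γ : SL2Z) : Matrix (Fin 2) (Fin 2) ℤ) 1 1 - 1))
    (η : Γ → ℂ → ℂ) (hη : IsMultiplierSystem Γ η) (R : ℝ) (hR : R < 1)
    (hN : 4 * √R / (1 - R) < N) (γ : Γ) (hγ : γ ≠ 1) (z : ℍ) (hz : tt z < R) :
    ¬ tt (γ • z) < R := by
  intro hz'
  have s1 := sinh_dist_lt N R hR hN z hz
  have s2 := sinh_dist_lt N R hR hN _ hz'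
  have hc := cosh_dist_I (γ : SL2Z)
  have hl := large N Γ hcong η hη γ hγ
  have hl' : (N : ℝ) ^ 2 ≤ ((((γ : SL2Z) 0 0 - (γ : SL2Z) 1 1) ^ 2 +
      ((γ : SL2Z) 0 1 + (γ : SL2Z) 1 0) ^ 2 : ℤ) : ℝ) := by exact_mod_cast hl
  have htri : dist ((γ : SL2Z) • UpperHalfPlane.I) UpperHalfPlane.I ≤
      dist z UpperHalfPlane.I + dist (γ • z) UpperHalfPlane.I := by
    calc _ ≤ dist ((γ : SL2Z) • UpperHalfPlane.I) ((γ : SL2Z) • z)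
          + dist ((γ : SL2Z) • z) UpperHalfPlane.I := dist_triangle _ _ _
      _ = _ := by rw [dist_SL2Z, dist_comm]; rfl
  set D := max (dist z UpperHalfPlane.I) (dist (γ • z) UpperHalfPlane.I) with hD
  have hsD : Real.sinh D < N / 2 := by
    rcases max_choice (dist z UpperHalfPlane.I) (dist (γ • z) UpperHalfPlane.I) with h | h <;>
      rw [hD, h] <;> assumption
  have hD0 : 0 ≤ D := le_max_of_le_left dist_nonneg
  have h1 : Real.cosh (dist ((γ : SL2Z) • UpperHalfPlane.I) UpperHalfPlane.I) ≤
      Real.cosh (2 * D) := by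
    rw [Real.cosh_le_cosh, abs_of_nonneg dist_nonneg, abs_of_nonneg (by positivity)]
    have := le_max_left (dist z UpperHalfPlane.I) (dist (γ • z) UpperHalfPlane.I)
    have := le_max_right (dist z UpperHalfPlane.I) (dist (γ • z) UpperHalfPlane.I)
    linarith
  rw [Real.cosh_two_mul, Real.cosh_sq, hc] at h1
  have h0 := Real.sinh_nonneg_iff.mpr hD0
  nlinarith

lemma mass_set (m : ℝ) (k : ℕ) (S : Set ℝ) (hS : MeasurableSet S) :
    ∫⁻ z in tt ⁻¹' S, ENNReal.ofReal (KK m k (tt z)) =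
      ENNReal.ofReal (4 * π) * ∫⁻ t in S ∩ Set.Ioo 0 1,
        ENNReal.ofReal (t ^ ((k : ℝ) / 2) * (1 - t) ^ (m / 2 - 2)) := by
  have hK : Measurable (fun t => ENNReal.ofReal (KK m k t)) := by unfold KK; fun_prop
  rw [← lintegral_indicator (measurable_tt hS)]
  have := radial (S.indicator fun t => ENNReal.ofReal (KK m k t)) (hK.indicator hS)
  refine Eq.trans ?_ (this.trans ?_)
  · rfl
  · rw [← Measure.restrict_restrict hS, ← lintegral_indicator hS, mul_comm 4 π,
      ENNReal.ofReal_mul Real.pi_pos.le, mul_assoc,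
      ← lintegral_const_mul _ (Measurable.indicator (by fun_prop) hS)]
    congr 1
    refine setLIntegral_congr_fun measurableSet_Ioo fun t ht => ?_
    have h1 : 0 < 1 - t := by linarith [ht.2]
    by_cases htS : t ∈ S
    · simp only [Set.indicator_of_mem htS, KK]
      rw [← ENNReal.ofReal_mul (by positivity), ← ENNReal.ofReal_mul (by norm_num),
        Real.rpow_sub h1]
      congr 1
      simp
      field_simp
    · simp [Set.indicator_of_notMem htS]

end Helpers

theorem stmt4 (N : ℕ) (hN : 0 < N) (Γ : Subgroup SL2Z) (hΓ : Γ.FiniteIndex)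
    (hcong : ∀ γ : Γ,
      (N : ℤ) ∣ (((γ : SL2Z) : Matrix (Fin 2) (Fin 2) ℤ) 0 0 - 1) ∧
      (N : ℤ) ∣ (((γ : SL2Z) : Matrix (Fin 2) (Fin 2) ℤ) 0 1) ∧
      (N : ℤ) ∣ (((γ : SL2Z) : Matrix (Fin 2) (Fin 2) ℤ) 1 0) ∧
      (N : ℤ) ∣ (((γ : SL2Z) : Matrix (Fin 2) (Fin 2) ℤ) 1 1 - 1))
    (η : Γ → ℂ → ℂ) (hη : IsMultiplierSystem Γ η)
    (χ : Γ →* ℂˣ) (hχ : HasFiniteOrderChar Γ χ)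
    (m : ℝ) (j : ℕ) (hm : m = 5 / 2 + j)
    (hmI : ∀ γ : Γ, ((γ : SL2Z) : Matrix (Fin 2) (Fin 2) ℤ) = -1 →
      (χ γ : ℂ) = η γ I ^ (-(5 + 2 * (j : ℤ))))
    (k : ℕ) (M : ℝ) (hM : M ∈ Set.Ioo (0 : ℝ) 1)
    (hmed : ∫ t in (0 : ℝ)..M, t ^ ((k : ℝ) / 2) * (1 - t) ^ (m / 2 - 2) =
      ∫ t in M..(1 : ℝ), t ^ ((k : ℝ) / 2) * (1 - t) ^ (m / 2 - 2))
    (hNM : (N : ℝ) > 4 * M ^ ((1 : ℝ) / 2) / (1 - M)) :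
    ∃ z ∈ UH, PoincareP Γ η χ m j k z ≠ 0 := by
  obtain ⟨R, hR, hRN⟩ := exists_R N M hM hNM
  have hR0 : 0 < R := hM.1.trans hR.1
  have hmass := beta_lt k m (by rw [hm]; linarith [(Nat.cast_nonneg j : (0:ℝ) ≤ j)]) M R hM hR hmed
  have i1 : MeasurableConstSMul Γ UpperHalfPlane :=
    ⟨fun γ => measurable_const_smul (((γ : SL2Z) : Matrix.GeneralLinearGroup (Fin 2) ℝ))⟩
  have i2 : SMulInvariantMeasure Γ UpperHalfPlane (volume : Measure UpperHalfPlane) :=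
    ⟨fun γ s hs => measure_preimage_smul_of_nullMeasurableSet (μ := (volume : Measure UpperHalfPlane))
      hs.nullMeasurableSet (((γ : SL2Z) : Matrix.GeneralLinearGroup (Fin 2) ℝ))⟩
  have hcount0 : Countable SL2Z := by
    have : Countable (Matrix (Fin 2) (Fin 2) ℤ) :=
      inferInstanceAs (Countable (Fin 2 → Fin 2 → ℤ))
    exact Subtype.countable
  have hcount : Countable Γ := Subtype.countable
  have hK : Measurable (fun z => ENNReal.ofReal (KK m k (tt z))) := by
    have := measurable_tt
    unfold KK; fun_prop
  obtain ⟨z, hz⟩ := crit (G := Γ) (volume : Measure UpperHalfPlane) _ hK (tt ⁻¹' Set.Iio R)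
    (measurable_tt measurableSet_Iio)
    (fun γ hγ z hz => main_crit N Γ hcong η hη R hR.2 hRN γ hγ z hz) (by
      rw [← Set.preimage_compl, mass_set m k _ measurableSet_Iio,
        mass_set m k _ measurableSet_Iio.compl]
      have e1 : Set.Iio R ∩ Set.Ioo 0 1 = Set.Ioo 0 R := by
        ext t
        simp only [Set.mem_inter_iff, Set.mem_Iio, Set.mem_Ioo]
        constructor
        · exact fun h => ⟨h.2.1, h.1⟩
        · exact fun h => ⟨h.2, h.1, h.2.trans hR.2⟩
      have e2 : (Set.Iio R)ᶜ ∩ Set.Ioo 0 1 = Set.Ico R 1 := by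
        ext t
        simp only [Set.mem_inter_iff, Set.mem_compl_iff, Set.mem_Iio, Set.mem_Ioo, not_lt,
          Set.mem_Ico]
        constructor
        · exact fun h => ⟨h.1, h.2.2⟩
        · exact fun h => ⟨h.1, hR0.trans_le h.1, h.2⟩
      rw [e1, e2, setLIntegral_congr Ico_ae_eq_Ioc, ← setLIntegral_congr Ioo_ae_eq_Ioc]
      exact (ENNReal.mul_lt_mul_iff_right (by positivity) ENNReal.ofReal_ne_top).mpr hmass)
  refine ⟨z, z.im_pos, tsum_ne_zero_of _ 1 ?_⟩
  have hz0 := z.im_pos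
  have hT : ∀ γ : Γ, ENNReal.ofReal (KK m k (tt (γ • z))) =
      ‖PTerm Γ η χ m j k γ z‖ₑ * ENNReal.ofReal (z.im ^ (m / 2)) := by
    intro γ
    rw [← pterm_norm Γ η hη χ hχ m j hm k γ z, ENNReal.ofReal_mul (norm_nonneg _), ofReal_norm]
  have h1 := hT 1
  rw [one_smul] at h1
  rw [h1] at hz
  simp_rw [hT] at hz
  rw [ENNReal.tsum_mul_right] at hz
  exact lt_of_mul_lt_mul_right' hz
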